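/- Let β* = 0 if h_i − h_j ≤ 2L for all indices i, j, and otherwise let β* be the maximum of (h_i − h_j − 2L)/|t_i − t_j| over all pairs with h_i − h_j > 2L. Then there exists a feasible β*-path g* such that for every β ≥ 0 and every feasible β-path g, the number of links of g* is at most the number of links of g. (A minimum-link feasible path can be taken to have slope exactly β*.) -/

import Mathlib

/-- `PWLinSlope β a b g` : `g` is continuous piecewise-linear on `[a, b]`,
affine with slope `β` or `-β` on each interval of some finite partition of `[a, b]`. -/
def PWLinSlope (β a b : ℝ) (g : ℝ → ℝ) : Prop :=
  ∃ m : ℕ, ∃ s : ℕ → ℝ, s 0 = a ∧ s m = b ∧ (∀ k < m, s k < s (k + 1)) ∧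
    ∀ k < m, ∃ σ : ℝ, (σ = β ∨ σ = -β) ∧
      ∀ x ∈ Set.Icc (s k) (s (k + 1)), g x = g (s k) + σ * (x - s k)

/-- `Feasible a b L f β g` : `g` is a feasible `β`-path over `[a, b]` for the corridor of
half-width `L` around the α-path `f`. -/
def Feasible (a b L : ℝ) (f : ℝ → ℝ) (β : ℝ) (g : ℝ → ℝ) : Prop :=
  PWLinSlope β a b g ∧ ∀ x ∈ Set.Icc a b, |g x - f x| ≤ L

/-- The number of links of `g` on `[a, b]`: the minimal number of intervals in a finite
partition of `[a, b]` into intervals on each of which `g` is affine. -/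
noncomputable def numLinks (a b : ℝ) (g : ℝ → ℝ) : ℕ :=
  sInf {m : ℕ | ∃ s : ℕ → ℝ, s 0 = a ∧ s m = b ∧ (∀ k < m, s k < s (k + 1)) ∧
    ∀ k < m, ∃ c σ : ℝ, ∀ x ∈ Set.Icc (s k) (s (k + 1)), g x = c + σ * x}

/-! The inequality `f x - f y ≤ 2 * L + B * |x - y|` is necessary for a feasible `B`-path to exist.
When it holds, build such a path greedily. Follow a ray of slope `±B` that touches the wall of the
corridor it moves away from, and turn at the last moment at which the ray of the opposite slope
still stays inside the other wall; that new ray then touches the other wall. Suppose that a path `g`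
in the corridor moves with slope at least `B` in absolute value, and that the greedy contact point
lies beyond the point where `g` last turned. From the contact point on `g` stays above the greedy
ray, so the greedy path need not turn before `g` does and its next contact point again lies beyond
the turn of `g`. Hence the greedy path never uses more links than `g`. -/

open Set

/-- `s 0 < s 1 < ⋯ < s m` is a partition of `[a, b]` into `m` intervals. The values of `s` beyond
`m` are irrelevant. -/
structure IsPartition (a b : ℝ) (m : ℕ) (s : ℕ → ℝ) : Prop where
  zero : s 0 = a
  last : s m = b
  lt_succ : ∀ k < m, s k < s (k + 1)

/-- `g` is affine with slope `σ` on `[p, q]`. -/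
def AffineWithSlope (σ : ℝ) (g : ℝ → ℝ) (p q : ℝ) : Prop :=
  ∀ x ∈ Icc p q, g x = g p + σ * (x - p)

/-- `FeasibleWith a b L f B J g`: `g` is a feasible `B`-path over `[a, b]`, and this is witnessed by
a partition of `[a, b]` into at most `J` intervals. -/
structure FeasibleWith (a b L : ℝ) (f : ℝ → ℝ) (B : ℝ) (J : ℕ) (g : ℝ → ℝ) : Prop where
  exists_partition : ∃ m ≤ J, ∃ s, IsPartition a b m s ∧
    ∀ k < m, ∃ σ, (σ = B ∨ σ = -B) ∧ AffineWithSlope σ g (s k) (s (k + 1))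
  abs_sub_le : ∀ x ∈ Icc a b, |g x - f x| ≤ L

/-- The slopes `β ≥ 0` which suffice to get from the lower to the upper wall of the corridor between
any two points of `[a, b]`. -/
structure AdmissibleSlope (a b L : ℝ) (f : ℝ → ℝ) (β : ℝ) : Prop where
  nonneg : 0 ≤ β
  sub_le : ∀ x ∈ Icc a b, ∀ y ∈ Icc a b, f x - f y ≤ 2 * L + β * |x - y|

/-- `f` interpolates the heights `h 0, …, h n` at the times `t 0, …, t n` piecewise linearly. -/
def IsLinearInterpolation (n : ℕ) (t h : ℕ → ℝ) (f : ℝ → ℝ) : Prop :=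
  ∀ i < n, ∀ x ∈ Icc (t i) (t (i + 1)),
    f x = h i + (x - t i) * ((h (i + 1) - h i) / (t (i + 1) - t i))

/-- The function `g` up to `τ`, continued from `(τ, g τ)` by a ray of slope `σ`. -/
noncomputable def extendByRay (g : ℝ → ℝ) (τ σ : ℝ) (x : ℝ) : ℝ :=
  if x ≤ τ then g x else g τ + σ * (x - τ)

/-- A state of the greedy construction: the path `γ` has been built on `[a, τ]` with at most `J`
links and is about to move in the direction `d = ±1`. In the corridor reflected so that `d` points
upwards, the ray of slope `B` from `(τ, γ τ)` stays above the lower wall and touches it at `u`. -/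
structure GreedyState (a b L : ℝ) (f : ℝ → ℝ) (B : ℝ) (J : ℕ) (d τ u : ℝ) (γ : ℝ → ℝ) : Prop where
  feasibleWith : FeasibleWith a τ L f B J γ
  abs_dir : |d| = 1
  start_le : a ≤ τ
  le_contact : τ ≤ u
  contact_le : u ≤ b
  contact : d * γ τ + B * (u - τ) = d * f u - L
  wall_le_ray : ∀ v ∈ Icc τ b, d * f v - L ≤ d * γ τ + B * (v - τ)

variable {a b B L β σ d τ : ℝ} {m n J : ℕ} {s t h : ℕ → ℝ} {f g γ : ℝ → ℝ}

namespace IsPartition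

lemma strictMonoOn (hs : IsPartition a b m s) : StrictMonoOn s (Iic m) :=
  strictMonoOn_Iic_of_lt_succ hs.lt_succ

lemma mem_Icc (hs : IsPartition a b m s) {k : ℕ} (hk : k ≤ m) : s k ∈ Icc a b :=
  ⟨hs.zero ▸ hs.strictMonoOn.monotoneOn (Nat.zero_le m) hk (Nat.zero_le k),
    hs.last ▸ hs.strictMonoOn.monotoneOn hk self_mem_Iic hk⟩

lemma Icc_subset_Icc (hs : IsPartition a b m s) {k : ℕ} (hk : k < m) :
    Icc (s k) (s (k + 1)) ⊆ Icc a b :=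
  Set.Icc_subset_Icc (hs.mem_Icc hk.le).1 (hs.mem_Icc hk).2

lemma left_lt_right (hs : IsPartition a b m s) (hm : 0 < m) : a < b :=
  hs.zero ▸ hs.last ▸ hs.strictMonoOn (Nat.zero_le m) self_mem_Iic hm

lemma pos (hs : IsPartition a b m s) (hab : a < b) : 0 < m := by
  rcases Nat.eq_zero_or_pos m with rfl | hm
  · exact absurd (hs.zero.symm.trans hs.last) hab.ne
  · exact hm

lemma exists_mem_Ico (hs : IsPartition a b m s) {x : ℝ} (hx : x ∈ Ico a b) :
    ∃ k < m, x ∈ Ico (s k) (s (k + 1)) := by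
  classical
  have hex : ∃ k, x < s k := ⟨m, hs.last ▸ hx.2⟩
  obtain ⟨k, hk⟩ : ∃ k, Nat.find hex = k + 1 :=
    Nat.exists_eq_succ_of_ne_zero fun h0 =>
      (Nat.find_eq_zero hex |>.mp h0).not_ge (hs.zero.trans_le hx.1)
  have hkm : k + 1 ≤ m := hk ▸ Nat.find_min' hex (hs.last ▸ hx.2)
  exact ⟨k, hkm, not_lt.mp (Nat.find_min hex (hk ▸ k.lt_succ_self)), hk ▸ Nat.find_spec hex⟩

lemma exists_mem_Icc (hs : IsPartition a b m s) (hm : 0 < m) {x : ℝ} (hx : x ∈ Icc a b) :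
    ∃ k < m, x ∈ Icc (s k) (s (k + 1)) := by
  rcases hx.2.lt_or_eq with hxb | rfl
  · obtain ⟨k, hk, hxk⟩ := hs.exists_mem_Ico ⟨hx.1, hxb⟩
    exact ⟨k, hk, Ico_subset_Icc_self hxk⟩
  · obtain ⟨k, rfl⟩ := Nat.exists_eq_succ_of_ne_zero hm.ne'
    exact ⟨k, k.lt_succ_self, hs.last ▸ (hs.lt_succ k k.lt_succ_self).le, hs.last.ge⟩

lemma glue {P : ℝ → ℝ → Prop} (hs : IsPartition a b m s) (hrefl : ∀ x, P x x)
    (htrans : ∀ {x y z}, x ≤ y → y ≤ z → P x y → P y z → P x z)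
    (hpiece : ∀ k < m, P (s k) (s (k + 1))) : P a b := by
  suffices ∀ k ≤ m, P a (s k) from hs.last ▸ this m le_rfl
  intro k
  induction k with
  | zero => exact fun _ => hs.zero ▸ hrefl _
  | succ k ih =>
    exact fun hk => htrans (hs.mem_Icc (Nat.le_of_succ_le hk)).1 (hs.lt_succ k hk).le
      (ih (Nat.le_of_succ_le hk)) (hpiece k hk)

lemma update {b' : ℝ} (hs : IsPartition a b m s) (hb : b < b') :
    IsPartition a b' (m + 1) (Function.update s (m + 1) b') where
  zero := by rw [Function.update_of_ne (by lia), hs.zero]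
  last := Function.update_self ..
  lt_succ k hk := by
    rw [Function.update_of_ne (by lia)]
    rcases Nat.lt_succ_iff_lt_or_eq.mp hk with hk | rfl
    · rw [Function.update_of_ne (by lia)]
      exact hs.lt_succ k hk
    · rwa [Function.update_self, hs.last]

end IsPartition

lemma monotoneOn_Icc_trans {p q r : ℝ} (hpq : p ≤ q) (hqr : q ≤ r) (hg : MonotoneOn g (Icc p q))
    (hg' : MonotoneOn g (Icc q r)) : MonotoneOn g (Icc p r) :=
  Icc_union_Icc_eq_Icc hpq hqr ▸ hg.union_right hg' (isGreatest_Icc hpq) (isLeast_Icc hqr)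

lemma continuousOn_Icc_trans {p q r : ℝ} (hpq : p ≤ q) (hqr : q ≤ r) (hg : ContinuousOn g (Icc p q))
    (hg' : ContinuousOn g (Icc q r)) : ContinuousOn g (Icc p r) :=
  Icc_union_Icc_eq_Icc hpq hqr ▸ hg.union_of_isClosed hg' isClosed_Icc isClosed_Icc

namespace AffineWithSlope

variable {p q : ℝ}

lemma of_eq_add_mul {c : ℝ} (hpq : p ≤ q) (hg : ∀ x ∈ Icc p q, g x = c + σ * x) :
    AffineWithSlope σ g p q := fun x hx => by
  rw [hg x hx, hg p (left_mem_Icc.mpr hpq)]; ring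

lemma eq_add_mul (hg : AffineWithSlope σ g p q) :
    ∃ c, ∀ x ∈ Icc p q, g x = c + σ * x :=
  ⟨g p - σ * p, fun x hx => by rw [hg x hx]; ring⟩

lemma congr (hg : AffineWithSlope σ g p q) (hpq : p ≤ q) (h : EqOn γ g (Icc p q)) :
    AffineWithSlope σ γ p q := fun x hx => by
  rw [h hx, h (left_mem_Icc.mpr hpq), hg x hx]

lemma continuousOn (hg : AffineWithSlope σ g p q) : ContinuousOn g (Icc p q) :=
  ContinuousOn.congr (f := fun x => g p + σ * (x - p)) (by fun_prop) hg

lemma monotoneOn (hg : AffineWithSlope σ g p q) {c : ℝ} (h : c ≤ d * σ) :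
    MonotoneOn (fun x => d * g x - c * x) (Icc p q) := by
  intro x hx y hy hxy
  simp only [hg x hx, hg y hy]
  linarith [mul_le_mul_of_nonneg_right h (sub_nonneg.mpr hxy)]

lemma slope_unique {σ' p' q' : ℝ} (hg : AffineWithSlope σ g p q) (hg' : AffineWithSlope σ' g p' q')
    (hp : p ∈ Ico p' q') (hpq : p < q) : σ = σ' := by
  have hpy : p < min q q' := lt_min hpq hp.2
  have heq := hg (min q q') ⟨hpy.le, min_le_left ..⟩
  rw [hg' _ ⟨hp.1.trans hpy.le, min_le_right ..⟩, hg' p (Ico_subset_Icc_self hp)] at heq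
  exact mul_right_cancel₀ (sub_pos.mpr hpy).ne' (by linarith)

end AffineWithSlope

lemma mul_mul_of_abs_eq_one (hd : |d| = 1) (x : ℝ) : d * (d * x) = x := by
  rw [← mul_assoc, ← abs_mul_abs_self, hd, one_mul, one_mul]

lemma abs_mul_of_abs_eq_one (hd : |d| = 1) (x : ℝ) : |d * x| = |x| := by
  rw [abs_mul, hd, one_mul]

lemma exists_dir_of_eq_or_eq_neg (hσ : σ = β ∨ σ = -β) : ∃ d : ℝ, |d| = 1 ∧ σ = d * β := by
  rcases hσ with rfl | rfl
  · exact ⟨1, by norm_num, by ring⟩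
  · exact ⟨-1, by norm_num, by ring⟩

lemma pWLinSlope_iff : PWLinSlope β a b g ↔ ∃ m s, IsPartition a b m s ∧
    ∀ k < m, ∃ σ, (σ = β ∨ σ = -β) ∧ AffineWithSlope σ g (s k) (s (k + 1)) :=
  ⟨fun ⟨m, s, h0, hm, hlt, hg⟩ => ⟨m, s, ⟨h0, hm, hlt⟩, hg⟩,
    fun ⟨m, s, hs, hg⟩ => ⟨m, s, hs.zero, hs.last, hs.lt_succ, hg⟩⟩

lemma PWLinSlope.sub_le_mul_abs (hg : PWLinSlope β a b g) (hβ : 0 ≤ β) {x y : ℝ}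
    (hx : x ∈ Icc a b) (hy : y ∈ Icc a b) : g x - g y ≤ β * |x - y| := by
  obtain ⟨m, s, hs, hlin⟩ := pWLinSlope_iff.mp hg
  have hmono : ∀ d : ℝ, |d| = 1 → MonotoneOn (fun x => d * g x - -β * x) (Icc a b) := by
    refine fun d hd => hs.glue (P := fun p q => MonotoneOn _ (Icc p q)) (by simp)
      monotoneOn_Icc_trans fun k hk => ?_
    obtain ⟨σ, hσ, hlin⟩ := hlin k hk
    refine hlin.monotoneOn ?_
    have habs : |d * σ| = β := by
      rw [abs_mul_of_abs_eq_one hd]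
      rcases hσ with rfl | rfl <;> simp only [abs_neg, abs_of_nonneg hβ]
    linarith [neg_abs_le (d * σ)]
  rcases le_total x y with hxy | hxy
  · have := hmono 1 (by norm_num) hx hy hxy
    rw [abs_of_nonpos (sub_nonpos.mpr hxy)]
    linarith
  · have := hmono (-1) (by norm_num) hy hx hxy
    rw [abs_of_nonneg (sub_nonneg.mpr hxy)]
    linarith

lemma Feasible.admissibleSlope (hg : Feasible a b L f β g) (hβ : 0 ≤ β) :
    AdmissibleSlope a b L f β where
  nonneg := hβ
  sub_le x hx y hy := by
    have hgf := abs_le.mp (hg.2 x hx)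
    have hgf' := abs_le.mp (hg.2 y hy)
    linarith [hg.1.sub_le_mul_abs hβ hx hy]

lemma AdmissibleSlope.dir_mul_sub_le (hB : AdmissibleSlope a b L f B) (hd : |d| = 1) {x y : ℝ}
    (hx : x ∈ Icc a b) (hy : y ∈ Icc a b) : d * f x - d * f y ≤ 2 * L + B * |x - y| := by
  rcases eq_or_eq_neg_of_abs_eq hd with rfl | rfl
  · linarith [hB.sub_le x hx y hy]
  · rw [abs_sub_comm]
    linarith [hB.sub_le y hy x hx]

/-! ### Numbers of links -/

lemma numLinks_eq_sInf : numLinks a b g = sInf {m | ∃ s, IsPartition a b m s ∧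
    ∀ k < m, ∃ σ, AffineWithSlope σ g (s k) (s (k + 1))} := by
  unfold numLinks
  congr with m
  constructor
  · rintro ⟨s, h0, hm, hlt, hg⟩
    refine ⟨s, ⟨h0, hm, hlt⟩, fun k hk => ?_⟩
    obtain ⟨c, σ, hc⟩ := hg k hk
    exact ⟨σ, .of_eq_add_mul (hlt k hk).le hc⟩
  · rintro ⟨s, hs, hg⟩
    refine ⟨s, hs.zero, hs.last, hs.lt_succ, fun k hk => ?_⟩
    obtain ⟨σ, hσ⟩ := hg k hk
    obtain ⟨c, hc⟩ := hσ.eq_add_mul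
    exact ⟨c, σ, hc⟩

lemma IsPartition.isLeast_numLinks (hs : IsPartition a b m s)
    (hg : ∀ k < m, ∃ σ, AffineWithSlope σ g (s k) (s (k + 1))) :
    IsLeast {m | ∃ s, IsPartition a b m s ∧ ∀ k < m, ∃ σ, AffineWithSlope σ g (s k) (s (k + 1))}
      (numLinks a b g) := by
  rw [numLinks_eq_sInf]
  exact ⟨Nat.sInf_mem ⟨m, s, hs, hg⟩, fun _ => Nat.sInf_le⟩

lemma PWLinSlope.exists_partition_numLinks (hg : PWLinSlope β a b g) :
    ∃ s, IsPartition a b (numLinks a b g) s ∧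
      ∀ k < numLinks a b g, ∃ σ, (σ = β ∨ σ = -β) ∧ AffineWithSlope σ g (s k) (s (k + 1)) := by
  obtain ⟨m, s, hs, hlin⟩ := pWLinSlope_iff.mp hg
  obtain ⟨s', hs', hlin'⟩ :=
    (hs.isLeast_numLinks fun k hk => (hlin k hk).imp fun _ => And.right).1
  refine ⟨s', hs', fun k hk => ?_⟩
  have hlt := hs'.lt_succ k hk
  obtain ⟨σ, hσ⟩ := hlin' k hk
  obtain ⟨j, hj, hkj⟩ := hs.exists_mem_Ico
    ⟨(hs'.mem_Icc hk.le).1, hlt.trans_le (hs'.mem_Icc hk).2⟩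
  obtain ⟨σ', hσ', hlinj⟩ := hlin j hj
  exact ⟨σ, hσ.slope_unique hlinj hkj hlt ▸ hσ', hσ⟩

lemma extendByRay_of_le {x : ℝ} (hx : x ≤ τ) : extendByRay γ τ σ x = γ x := if_pos hx

lemma extendByRay_of_ge {x : ℝ} (hx : τ ≤ x) : extendByRay γ τ σ x = γ τ + σ * (x - τ) := by
  rcases hx.eq_or_lt with rfl | hx
  · rw [extendByRay_of_le le_rfl]; ring
  · exact if_neg hx.not_ge

lemma affineWithSlope_extendByRay (τ' : ℝ) : AffineWithSlope σ (extendByRay γ τ σ) τ τ' :=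
  fun x hx => by rw [extendByRay_of_ge hx.1, extendByRay_of_le le_rfl]

namespace FeasibleWith

lemma mono {J' : ℕ} (hγ : FeasibleWith a b L f B J γ) (hJ : J ≤ J') :
    FeasibleWith a b L f B J' γ where
  exists_partition := hγ.exists_partition.imp fun _ hm => hm.imp_left hJ.trans'
  abs_sub_le := hγ.abs_sub_le

lemma feasible (hγ : FeasibleWith a b L f B J γ) : Feasible a b L f B γ := by
  obtain ⟨m, -, hγm⟩ := hγ.exists_partition
  exact ⟨pWLinSlope_iff.mpr ⟨m, hγm⟩, hγ.abs_sub_le⟩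

lemma numLinks_le (hγ : FeasibleWith a b L f B J γ) : numLinks a b γ ≤ J := by
  obtain ⟨m, hmJ, s, hs, hlin⟩ := hγ.exists_partition
  have hg : ∀ k < m, ∃ σ, AffineWithSlope σ γ (s k) (s (k + 1)) := fun k hk =>
    (hlin k hk).imp fun _ => And.right
  exact ((hs.isLeast_numLinks hg).2 ⟨s, hs, hg⟩).trans hmJ

lemma extend {τ' : ℝ} (hγ : FeasibleWith a τ L f B J γ) (hττ' : τ ≤ τ')
    (hσ : σ = B ∨ σ = -B) (hray : ∀ x ∈ Icc τ τ', |γ τ + σ * (x - τ) - f x| ≤ L) :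
    FeasibleWith a τ' L f B (J + 1) (extendByRay γ τ σ) where
  abs_sub_le x hx := by
    rcases le_total x τ with hxτ | hxτ
    · rw [extendByRay_of_le hxτ]
      exact hγ.abs_sub_le x ⟨hx.1, hxτ⟩
    · rw [extendByRay_of_ge hxτ]
      exact hray x ⟨hxτ, hx.2⟩
  exists_partition := by
    obtain ⟨m, hmJ, s, hs, hlin⟩ := hγ.exists_partition
    have hlin' : ∀ k < m, ∃ ρ, (ρ = B ∨ ρ = -B) ∧
        AffineWithSlope ρ (extendByRay γ τ σ) (s k) (s (k + 1)) := fun k hk =>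
      (hlin k hk).imp fun ρ hρ => hρ.imp_right fun hρ => hρ.congr (hs.lt_succ k hk).le fun x hx =>
        extendByRay_of_le (hs.Icc_subset_Icc hk hx).2
    rcases hττ'.eq_or_lt with rfl | hlt
    · exact ⟨m, by lia, s, hs, hlin'⟩
    · refine ⟨m + 1, by lia, _, hs.update hlt, fun k hk => ?_⟩
      rw [Function.update_of_ne (by lia)]
      rcases Nat.lt_succ_iff_lt_or_eq.mp hk with hk | rfl
      · rw [Function.update_of_ne (by lia)]
        exact hlin' k hk
      · rw [Function.update_self, hs.last]
        exact ⟨σ, hσ, affineWithSlope_extendByRay τ'⟩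

end FeasibleWith

/-! ### The greedy construction -/

lemma exists_forall_le_of_lt {U V F : ℝ → ℝ} {w z : ℝ} (hU : ContinuousOn U (Icc a b))
    (hV : ContinuousOn V (Icc a b)) (hF : ContinuousOn F (Icc a b))
    (hw : ∀ v ∈ Icc a b, v ≤ w → V v ≤ U v) (hz : z ∈ Icc a b) (hUV : U z < V z) :
    ∃ u ∈ Icc a b, w ≤ u ∧ U u ≤ V u ∧ ∀ v ∈ Icc a b, U v < V v → F u ≤ F v := by
  set K := {v ∈ Icc (max a w) b | U v ≤ V v}
  have hsub : Icc (max a w) b ⊆ Icc a b := Icc_subset_Icc_left (le_max_left ..)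
  have hK : IsCompact K := isCompact_Icc.of_isClosed_subset
    (isClosed_Icc.isClosed_le (hU.mono hsub) (hV.mono hsub)) (sep_subset ..)
  have hmem : ∀ v ∈ Icc a b, U v < V v → v ∈ K := fun v hv hUv =>
    ⟨⟨max_le hv.1 (not_lt.mp fun hvw => hUv.not_ge (hw v hv hvw.le)), hv.2⟩, hUv.le⟩
  obtain ⟨u, ⟨huI, hUu⟩, hmin⟩ :=
    hK.exists_isMinOn ⟨z, hmem z hz hUV⟩ (hF.mono ((sep_subset ..).trans hsub))
  exact ⟨u, hsub huI, (le_max_right ..).trans huI.1, hUu, fun v hv hUv => hmin (hmem v hv hUv)⟩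

/-- The smaller `U v + B * v` is, the earlier the line of slope `-B` through the point `(v, U v)` of
the wall meets the ray of slope `B` from `(τ, Y)`. So minimizing this quantity gives the last
possible turn. -/
lemma exists_turning_point {U : ℝ → ℝ} {Y w : ℝ} (hU : ContinuousOn U (Icc τ b))
    (hturn : ∀ v ∈ Icc τ b, Y ≤ U v + B * (v - τ))
    (hw : ∀ v ∈ Icc τ b, v ≤ w → Y + B * (v - τ) ≤ U v) :
    (∀ v ∈ Icc τ b, Y + B * (v - τ) ≤ U v) ∨
    w < b ∧ ∃ T u, τ ≤ T ∧ T ≤ u ∧ u ≤ b ∧ w ≤ u ∧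
      (∀ v ∈ Icc τ T, Y + B * (v - τ) ≤ U v) ∧
      (∀ v ∈ Icc T b, Y + B * (T - τ) ≤ U v + B * (v - T)) ∧
      Y + B * (T - τ) = U u + B * (u - T) := by
  by_cases hfree : ∀ v ∈ Icc τ b, Y + B * (v - τ) ≤ U v
  · exact Or.inl hfree
  push Not at hfree
  obtain ⟨z, hz, hUz⟩ := hfree
  have hwz : w < z := not_le.mp fun hzw => hUz.not_ge (hw z hz hzw)
  have hB : 0 < B := by
    have := hturn z hz
    exact pos_of_mul_pos_left (b := z - τ) (by linarith) (by linarith [hz.1])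
  -- Minimizing only over the wall points on or below the ray ensures `T ≤ u`.
  obtain ⟨u, hu, hwu, hUu, hmin⟩ := exists_forall_le_of_lt (F := fun v => U v + B * v) hU
    (by fun_prop) (hU.add (by fun_prop)) hw hz hUz
  obtain ⟨T, hT⟩ : ∃ T, 2 * B * T = U u + B * (u + τ) - Y :=
    ⟨_, mul_div_cancel₀ _ (by positivity)⟩
  have hτT : τ ≤ T := by
    have := hturn u hu
    exact le_of_mul_le_mul_left (a := B) (by linarith) hB
  have hTu : T ≤ u := le_of_mul_le_mul_left (a := B) (by linarith) hB
  refine Or.inr ⟨hwz.trans_le hz.2, T, u, hτT, hTu, hu.2, hwu,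
    fun v hv => ?_, fun v hv => ?_, by linarith⟩
  · by_contra! hUv
    have := hmin v ⟨hv.1, hv.2.trans (hTu.trans hu.2)⟩ hUv
    nlinarith [mul_le_mul_of_nonneg_left hv.2 hB.le]
  · rcases lt_or_ge (U v) (Y + B * (v - τ)) with hUv | hUv
    · linarith [hmin v ⟨hτT.trans hv.1, hv.2⟩ hUv]
    · nlinarith [mul_le_mul_of_nonneg_left hv.1 hB.le]

namespace GreedyState

variable {u : ℝ}

lemma exists_start (hab : a ≤ b) (hf : ContinuousOn f (Icc a b)) (hB : AdmissibleSlope a b L f B)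
    (hd : |d| = 1) : ∃ u γ, GreedyState a b L f B 0 d a u γ := by
  obtain ⟨u, hu, hmax⟩ := isCompact_Icc.exists_isMaxOn (nonempty_Icc.mpr hab)
    (f := fun v => d * f v - B * v) ((continuousOn_const.mul hf).sub (by fun_prop))
  have hmax : ∀ v ∈ Icc a b, d * f v - B * v ≤ d * f u - B * u := fun v hv => hmax hv
  set Y := d * f u - L - B * (u - a) with hY
  refine ⟨u, fun _ => d * Y, ⟨⟨0, le_rfl, fun _ => a, ⟨rfl, rfl, by simp⟩, by simp⟩, ?_⟩, hd,
    le_rfl, hu.1, hu.2, by linarith [mul_mul_of_abs_eq_one hd Y],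
    fun v hv => by linarith [hmax v hv, mul_mul_of_abs_eq_one hd Y]⟩
  intro x hx
  obtain rfl : x = a := le_antisymm hx.2 hx.1
  have ha : x ∈ Icc x b := left_mem_Icc.mpr hab
  have hosc := hB.dir_mul_sub_le hd hu ha
  rw [abs_of_nonneg (sub_nonneg.mpr hu.1)] at hosc
  rw [← abs_mul_of_abs_eq_one hd, mul_sub, mul_mul_of_abs_eq_one hd, abs_le]
  constructor <;> linarith [hmax x ha]

lemma feasibleWith_extendByRay {T : ℝ} (hγ : GreedyState a b L f B J d τ u γ) (hτT : τ ≤ T)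
    (hTb : T ≤ b) (hray : ∀ v ∈ Icc τ T, d * γ τ + B * (v - τ) ≤ d * f v + L) :
    FeasibleWith a T L f B (J + 1) (extendByRay γ τ (d * B)) := by
  have hdB : d * B = B ∨ d * B = -B := by
    rcases eq_or_eq_neg_of_abs_eq hγ.abs_dir with rfl | rfl <;> simp
  refine hγ.feasibleWith.extend hτT hdB fun x hx => ?_
  have hd_mul : d * (γ τ + d * B * (x - τ) - f x) = d * γ τ + B * (x - τ) - d * f x := by
    linear_combination mul_mul_of_abs_eq_one hγ.abs_dir (B * (x - τ))
  rw [← abs_mul_of_abs_eq_one hγ.abs_dir, hd_mul, abs_le]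
  constructor <;> linarith [hray x hx, hγ.wall_le_ray x ⟨hx.1, hx.2.trans hTb⟩]

lemma turn {T u' : ℝ} (hγ : GreedyState a b L f B J d τ u γ) (hτT : τ ≤ T) (hTu' : T ≤ u')
    (hu'b : u' ≤ b) (hray : ∀ v ∈ Icc τ T, d * γ τ + B * (v - τ) ≤ d * f v + L)
    (hwall : ∀ v ∈ Icc T b, d * γ τ + B * (T - τ) ≤ d * f v + L + B * (v - T))
    (htouch : d * γ τ + B * (T - τ) = d * f u' + L + B * (u' - T)) :
    GreedyState a b L f B (J + 1) (-d) T u' (extendByRay γ τ (d * B)) := by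
  have hT : d * extendByRay γ τ (d * B) T = d * γ τ + B * (T - τ) := by
    rw [extendByRay_of_ge hτT]
    linear_combination mul_mul_of_abs_eq_one hγ.abs_dir (B * (T - τ))
  exact ⟨hγ.feasibleWith_extendByRay hτT (hTu'.trans hu'b) hray, by rw [abs_neg, hγ.abs_dir],
    hγ.start_le.trans hτT, hTu', hu'b, by linarith, fun v hv => by linarith [hwall v hv]⟩

lemma finish_or_turn {w : ℝ} (hγ : GreedyState a b L f B J d τ u γ)
    (hf : ContinuousOn f (Icc a b)) (hB : AdmissibleSlope a b L f B)
    (hw : ∀ v ∈ Icc u b, v ≤ w → d * f u - L + B * (v - u) ≤ d * f v + L) :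
    (∃ γ', FeasibleWith a b L f B (J + 1) γ') ∨
    w < b ∧ ∃ T u' γ', GreedyState a b L f B (J + 1) (-d) T u' γ' ∧ w ≤ u' ∧
      2 * L ≤ d * f u - d * f u' + B * (u' - u) := by
  have haτ := hγ.start_le
  have hτu := hγ.le_contact
  have hub := hγ.contact_le
  have hcontact := hγ.contact
  have hosc : ∀ x ∈ Icc τ u, ∀ v ∈ Icc x b,
      d * f u - d * f v ≤ 2 * L + B * ((u - x) + (v - x)) := fun x hx v hv => by
    have huv : |u - v| ≤ (u - x) + (v - x) := abs_le.mpr ⟨by linarith [hx.2], by linarith [hv.1]⟩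
    linarith [hB.dir_mul_sub_le hγ.abs_dir ⟨haτ.trans hτu, hub⟩
      ⟨(haτ.trans hx.1).trans hv.1, hv.2⟩, mul_le_mul_of_nonneg_left huv hB.nonneg]
  rcases exists_turning_point (τ := τ) (b := b) (B := B) (U := fun v => d * f v + L)
      (Y := d * γ τ) (w := w)
      ((continuousOn_const.mul (hf.mono (Icc_subset_Icc_left haτ))).add continuousOn_const)
      (fun v hv => by linarith [hosc τ ⟨le_rfl, hτu⟩ v hv])
      (fun v hv hvw => by
        rcases le_total v u with hvu | huv
        · linarith [hosc v ⟨hv.1, hvu⟩ v ⟨le_rfl, hv.2⟩]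
        · linarith [hw v ⟨huv, hv.2⟩ hvw])
    with hray | ⟨hwb, T, u', hτT, hTu', hu'b, hwu', hray, hwall, htouch⟩
  · exact Or.inl ⟨_, hγ.feasibleWith_extendByRay (hτu.trans hub) le_rfl hray⟩
  · refine Or.inr ⟨hwb, T, u', _, hγ.turn hτT hTu' hu'b hray hwall htouch, hwu', ?_⟩
    linarith [mul_le_mul_of_nonneg_left hTu' hB.nonneg]

lemma finish_or_add_le {η : ℝ} (hγ : GreedyState a b L f B J d τ u γ)
    (hf : ContinuousOn f (Icc a b)) (hB : AdmissibleSlope a b L f B) (hL : 0 ≤ L)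
    (hosc : ∀ x ∈ Icc a b, ∀ y ∈ Icc a b, |x - y| < η → |f x - f y| < L) (hBη : B * η ≤ L) :
    (∃ γ', FeasibleWith a b L f B (J + 1) γ') ∨
    ∃ T u' γ', GreedyState a b L f B (J + 1) (-d) T u' γ' ∧ u + η ≤ u' := by
  refine (hγ.finish_or_turn hf hB (w := u) fun v hv hvu => ?_).imp_right ?_
  · rw [le_antisymm hvu hv.1]
    linarith
  rintro ⟨-, T, u', γ', hγ', huu', hgap⟩
  refine ⟨T, u', γ', hγ', ?_⟩
  by_contra! hlt
  have hau : a ≤ u := hγ.start_le.trans hγ.le_contact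
  have hfu := hosc u ⟨hau, hγ.contact_le⟩ u' ⟨hau.trans huu', hγ'.contact_le⟩ (by
    rw [abs_sub_comm, abs_of_nonneg] <;> linarith)
  rw [← abs_mul_of_abs_eq_one hγ.abs_dir, mul_sub] at hfu
  have hrise : B * (u' - u) ≤ B * η := mul_le_mul_of_nonneg_left (by linarith) hB.nonneg
  linarith [le_abs_self (d * f u - d * f u')]

variable {w w' : ℝ}

lemma finish_or_turn_of_monotoneOn (hγ : GreedyState a b L f B J d τ u γ)
    (hf : ContinuousOn f (Icc a b)) (hB : AdmissibleSlope a b L f B)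
    (hg : ∀ x ∈ Icc a b, |g x - f x| ≤ L)
    (hsteep : MonotoneOn (fun x => d * g x - B * x) (Icc u w)) :
    (∃ γ', FeasibleWith a b L f B (J + 1) γ') ∨
    w < b ∧ ∃ T u' γ', GreedyState a b L f B (J + 1) (-d) T u' γ' ∧ w ≤ u' := by
  have hcorridor : ∀ x ∈ Icc a b, |d * g x - d * f x| ≤ L := fun x hx => by
    rw [← mul_sub, abs_mul_of_abs_eq_one hγ.abs_dir]
    exact hg x hx
  have hau := hγ.start_le.trans hγ.le_contact
  refine (hγ.finish_or_turn hf hB (w := w) fun v hv hvw => ?_).imp_right fun ⟨hwb, hturn⟩ => ?_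
  · have hgu := abs_le.mp (hcorridor u ⟨hau, hγ.contact_le⟩)
    have hgv := abs_le.mp (hcorridor v ⟨hau.trans hv.1, hv.2⟩)
    have hrise := hsteep ⟨le_rfl, hv.1.trans hvw⟩ ⟨hv.1, hvw⟩ hv.1
    dsimp only at hrise
    linarith
  · obtain ⟨T, u', γ', hγ', hwu', -⟩ := hturn
    exact ⟨hwb, T, u', γ', hγ', hwu'⟩

lemma finish_or_advance {d' : ℝ} (hγ : GreedyState a b L f B J d τ u γ)
    (hf : ContinuousOn f (Icc a b)) (hB : AdmissibleSlope a b L f B)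
    (hg : ∀ x ∈ Icc a b, |g x - f x| ≤ L)
    (hsteep : MonotoneOn (fun x => d * g x - B * x) (Icc u w)) (hww' : w ≤ w') (hd' : |d'| = 1)
    (hsteep' : MonotoneOn (fun x => d' * g x - B * x) (Icc w w')) :
    (∃ γ', FeasibleWith a b L f B (J + 1) γ') ∨
    ∃ d τ u γ, GreedyState a b L f B (J + 1) d τ u γ ∧
      MonotoneOn (fun x => d * g x - B * x) (Icc u w') := by
  rcases abs_eq_abs.mp (hd'.trans hγ.abs_dir.symm) with rfl | rfl
  · refine Or.inr ⟨d', τ, u, γ, { hγ with feasibleWith := hγ.feasibleWith.mono J.le_succ }, ?_⟩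
    rcases le_total u w with huw | hwu
    · exact monotoneOn_Icc_trans huw hww' hsteep hsteep'
    · exact hsteep'.mono (Icc_subset_Icc_left hwu)
  · refine (hγ.finish_or_turn_of_monotoneOn hf hB hg hsteep).imp_right ?_
    rintro ⟨-, T, u', γ', hγ', hwu'⟩
    exact ⟨-d, T, u', γ', hγ', hsteep'.mono (Icc_subset_Icc_left hwu')⟩

end GreedyState

lemma exists_forall_abs_sub_lt_of_continuousOn (hf : ContinuousOn f (Icc a b)) (hL : 0 < L) :
    ∃ δ > 0, ∀ x ∈ Icc a b, ∀ y ∈ Icc a b, |x - y| < δ → |f x - f y| < L :=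
  Metric.uniformContinuousOn_iff.mp (isCompact_Icc.uniformContinuousOn_of_continuous hf) L hL

/-- The greedy construction terminates because consecutive contact points lie on opposite walls of
a corridor of positive width, hence a definite distance apart. -/
lemma exists_feasibleWith (hab : a ≤ b) (hL : 0 < L) (hf : ContinuousOn f (Icc a b))
    (hB : AdmissibleSlope a b L f B) : ∃ J γ, FeasibleWith a b L f B J γ := by
  obtain ⟨δ, hδ, hosc⟩ := exists_forall_abs_sub_lt_of_continuousOn hf hL
  have hB0 := hB.nonneg
  set η := min δ (L / (B + 1))
  have hη : 0 < η := lt_min hδ (by positivity)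
  have hBη : B * η ≤ L := by
    have := (le_div_iff₀ (by positivity)).mp (min_le_right δ (L / (B + 1)))
    linarith
  have hosc_η : ∀ x ∈ Icc a b, ∀ y ∈ Icc a b, |x - y| < η → |f x - f y| < L :=
    fun x hx y hy hxy => hosc x hx y hy (hxy.trans_le (min_le_left ..))
  by_contra! hnone
  have hcontact : ∀ k : ℕ, ∃ J d τ u γ, GreedyState a b L f B J d τ u γ ∧ a + k * η ≤ u := by
    intro k
    induction k with
    | zero =>
      obtain ⟨u, γ, hγ⟩ := GreedyState.exists_start hab hf hB (d := 1) (by norm_num)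
      exact ⟨0, 1, a, u, γ, hγ, by simpa using hγ.le_contact⟩
    | succ k ih =>
      obtain ⟨J, d, τ, u, γ, hγ, hku⟩ := ih
      rcases hγ.finish_or_add_le hf hB hL.le hosc_η hBη with ⟨γ', hγ'⟩ | ⟨T, u', γ', hγ', huu'⟩
      · exact absurd hγ' (hnone _ _)
      · exact ⟨J + 1, -d, T, u', γ', hγ', by push_cast; linarith⟩
  obtain ⟨k, hk⟩ := Archimedean.arch (b - a + 1) hη
  obtain ⟨J, d, τ, u, γ, hγ, hku⟩ := hcontact k
  rw [nsmul_eq_mul] at hk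
  linarith [hγ.contact_le]

lemma IsPartition.exists_feasibleWith_of_monotoneOn (hs : IsPartition a b m s) (hm : 0 < m)
    (hf : ContinuousOn f (Icc a b)) (hB : AdmissibleSlope a b L f B)
    (hg : ∀ x ∈ Icc a b, |g x - f x| ≤ L)
    (hsteep : ∀ k < m, ∃ d : ℝ, |d| = 1 ∧
      MonotoneOn (fun x => d * g x - B * x) (Icc (s k) (s (k + 1)))) :
    ∃ γ, FeasibleWith a b L f B m γ := by
  have hgreedy : ∀ k < m, (∃ γ, FeasibleWith a b L f B (k + 1) γ) ∨
      ∃ d τ u γ, GreedyState a b L f B k d τ u γ ∧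
        MonotoneOn (fun x => d * g x - B * x) (Icc u (s (k + 1))) := by
    intro k
    induction k with
    | zero =>
      intro hm
      obtain ⟨d, hd, hmono⟩ := hsteep 0 hm
      obtain ⟨u, γ, hγ⟩ := GreedyState.exists_start (hs.left_lt_right hm).le hf hB hd
      exact Or.inr ⟨d, a, u, γ, hγ, hmono.mono (Icc_subset_Icc_left (hs.zero ▸ hγ.le_contact))⟩
    | succ k ih =>
      intro hk
      rcases ih (Nat.lt_of_succ_lt hk) with ⟨γ, hγ⟩ | ⟨d, τ, u, γ, hγ, hmono⟩
      · exact Or.inl ⟨γ, hγ.mono (Nat.le_succ _)⟩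
      · obtain ⟨d', hd', hmono'⟩ := hsteep (k + 1) hk
        exact (hγ.finish_or_advance hf hB hg hmono (hs.lt_succ _ hk).le hd' hmono').imp_left
          fun ⟨γ, hγ⟩ => ⟨γ, hγ.mono (Nat.le_succ _)⟩
  obtain ⟨k, rfl⟩ := Nat.exists_eq_succ_of_ne_zero hm.ne'
  rcases hgreedy k k.lt_succ_self with hfinish | ⟨d, τ, u, γ, hγ, hmono⟩
  · exact hfinish
  · rcases hγ.finish_or_turn_of_monotoneOn hf hB hg hmono with hfinish | ⟨hlt, -⟩
    · exact hfinish
    · exact absurd hs.last hlt.ne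

lemma Feasible.exists_feasibleWith_numLinks (hg : Feasible a b L f β g) (hab : a < b)
    (hf : ContinuousOn f (Icc a b)) (hB : AdmissibleSlope a b L f B) (hBβ : B ≤ β) :
    ∃ γ, FeasibleWith a b L f B (numLinks a b g) γ := by
  obtain ⟨s, hs, hlin⟩ := hg.1.exists_partition_numLinks
  refine hs.exists_feasibleWith_of_monotoneOn (hs.pos hab) hf hB hg.2 fun k hk => ?_
  obtain ⟨σ, hσ, hlin⟩ := hlin k hk
  obtain ⟨d, hd, rfl⟩ := exists_dir_of_eq_or_eq_neg hσ
  exact ⟨d, hd, hlin.monotoneOn (by rwa [mul_mul_of_abs_eq_one hd])⟩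

theorem AdmissibleSlope.exists_feasible_forall_numLinks_le (hB : AdmissibleSlope a b L f B)
    (hab : a < b) (hL : 0 < L) (hf : ContinuousOn f (Icc a b)) :
    ∃ gstar, Feasible a b L f B gstar ∧
      ∀ β, B ≤ β → ∀ g, Feasible a b L f β g → numLinks a b gstar ≤ numLinks a b g := by
  classical
  have hex := exists_feasibleWith hab.le hL hf hB
  obtain ⟨gstar, hgstar⟩ := Nat.find_spec hex
  exact ⟨gstar, hgstar.feasible, fun β hBβ g hg => hgstar.numLinks_le.trans
    (Nat.find_min' hex (hg.exists_feasibleWith_numLinks hab hf hB hBβ))⟩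

/-! ### Piecewise linear corridors -/

namespace AffineWithSlope

variable {p q : ℝ}

lemma mono {p' q' : ℝ} (hg : AffineWithSlope σ g p q) (hp : p ≤ p') (hpq' : p' ≤ q') (hq : q' ≤ q) :
    AffineWithSlope σ g p' q' := fun x hx => by
  rw [hg x ⟨hp.trans hx.1, hx.2.trans hq⟩, hg p' ⟨hp, hpq'.trans hq⟩]; ring

lemma neg (hg : AffineWithSlope σ g p q) : AffineWithSlope (-σ) (fun x => -g x) p q :=
  fun x hx => by dsimp only; rw [hg x hx]; ring

lemma le_of_endpoints_le {c k : ℝ} (hg : AffineWithSlope σ g p q) (hp : g p ≤ c + k * p)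
    (hq : g q ≤ c + k * q) : ∀ x ∈ Icc p q, g x ≤ c + k * x := by
  intro x hx
  rw [hg q ⟨hx.1.trans hx.2, le_rfl⟩] at hq
  rw [hg x hx]
  rcases le_total σ k with h | h
  · linarith [mul_le_mul_of_nonneg_right h (sub_nonneg.mpr hx.1)]
  · linarith [mul_le_mul_of_nonneg_right h (sub_nonneg.mpr hx.2)]

lemma le_add_mul_abs {x C : ℝ} (hg : AffineWithSlope σ g p q) (hx : x ∈ Icc p q → g x ≤ C)
    (hp : g p ≤ C + B * |x - p|) (hq : g q ≤ C + B * |x - q|) :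
    ∀ y ∈ Icc p q, g y ≤ C + B * |x - y| := by
  intro y hy
  -- The bound is affine on either side of its kink at `x`.
  rcases le_total y x with hyx | hxy
  · rw [abs_of_nonneg (by linarith [hy.1])] at hp ⊢
    have hend : g (min q x) ≤ C + B * x + -B * min q x := by
      rcases le_total q x with hqx | hxq
      · rw [abs_of_nonneg (sub_nonneg.mpr hqx)] at hq
        rw [min_eq_left hqx]
        linarith
      · rw [min_eq_right hxq]
        linarith [hx ⟨hy.1.trans hyx, hxq⟩]
    have hy' : y ∈ Icc p (min q x) := ⟨hy.1, le_min hy.2 hyx⟩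
    linarith [(hg.mono le_rfl (hy'.1.trans hy'.2) (min_le_left ..)).le_of_endpoints_le
      (by linarith) hend y hy']
  · rw [abs_of_nonpos (by linarith [hy.2])] at hq ⊢
    have hend : g (max p x) ≤ C - B * x + B * max p x := by
      rcases le_total x p with hxp | hpx
      · rw [abs_of_nonpos (sub_nonpos.mpr hxp)] at hp
        rw [max_eq_left hxp]
        linarith
      · rw [max_eq_right hpx]
        linarith [hx ⟨hpx, hxy.trans hy.2⟩]
    have hy' : y ∈ Icc (max p x) q := ⟨max_le hy.1 hxy, hy.2⟩
    linarith [(hg.mono (le_max_left ..) (hy'.1.trans hy'.2) le_rfl).le_of_endpoints_le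
      hend (by linarith) y hy']

end AffineWithSlope

lemma IsPartition.le_add_mul_abs {x C : ℝ} (hs : IsPartition a b m s) (hm : 0 < m)
    (hg : ∀ k < m, ∃ σ, AffineWithSlope σ g (s k) (s (k + 1))) (hx : g x ≤ C)
    (hvertex : ∀ k ≤ m, g (s k) ≤ C + B * |x - s k|) :
    ∀ y ∈ Icc a b, g y ≤ C + B * |x - y| := by
  intro y hy
  obtain ⟨k, hk, hyk⟩ := hs.exists_mem_Icc hm hy
  obtain ⟨σ, hσ⟩ := hg k hk
  exact hσ.le_add_mul_abs (fun _ => hx) (hvertex k hk.le) (hvertex (k + 1) hk) y hyk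

lemma IsPartition.admissibleSlope_of_vertices (hs : IsPartition a b m s) (hm : 0 < m) (hL : 0 ≤ L)
    (hf : ∀ k < m, ∃ σ, AffineWithSlope σ f (s k) (s (k + 1))) (hβ : 0 ≤ β)
    (hvertex : ∀ i ≤ m, ∀ j ≤ m, f (s i) - f (s j) ≤ 2 * L + β * |s i - s j|) :
    AdmissibleSlope a b L f β where
  nonneg := hβ
  sub_le x hx := by
    have hmixed : ∀ j ≤ m, ∀ y ∈ Icc a b, f y ≤ f (s j) + 2 * L + β * |s j - y| := fun j hj =>
      hs.le_add_mul_abs hm hf (by linarith) fun i hi => by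
        rw [abs_sub_comm]
        linarith [hvertex i hi j hj]
    have hneg : ∀ k < m, ∃ σ, AffineWithSlope σ (fun y => -f y) (s k) (s (k + 1)) := fun k hk =>
      let ⟨σ, hσ⟩ := hf k hk
      ⟨-σ, hσ.neg⟩
    intro y hy
    have hle := hs.le_add_mul_abs (C := 2 * L - f x) (B := β) hm hneg (by linarith)
      (fun j hj => by rw [abs_sub_comm]; linarith [hmixed j hj x hx]) y hy
    linarith

lemma isLeast_slope_of_isGreatest {βstar : ℝ} (ht : InjOn t (Iic n)) (hL : 0 ≤ L)
    (hβ0 : (∀ i ≤ n, ∀ j ≤ n, h i - h j ≤ 2 * L) → βstar = 0)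
    (hβmax : (∃ i ≤ n, ∃ j ≤ n, h i - h j > 2 * L) →
      IsGreatest {s : ℝ | ∃ i ≤ n, ∃ j ≤ n,
        h i - h j > 2 * L ∧ s = (h i - h j - 2 * L) / |t i - t j|} βstar) :
    IsLeast {β | 0 ≤ β ∧ ∀ i ≤ n, ∀ j ≤ n, h i - h j ≤ 2 * L + β * |t i - t j|} βstar := by
  by_cases hwide : ∃ i ≤ n, ∃ j ≤ n, h i - h j > 2 * L
  · obtain ⟨⟨i₀, hi₀, j₀, hj₀, hgap₀, hβstar⟩, hmax⟩ := hβmax hwide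
    have hdiv_le : ∀ β, ∀ i ≤ n, ∀ j ≤ n, h i - h j > 2 * L →
        ((h i - h j - 2 * L) / |t i - t j| ≤ β ↔ h i - h j ≤ 2 * L + β * |t i - t j|) := by
      intro β i hi j hj hgap
      have hij : t i ≠ t j := ht.ne hi hj (by rintro rfl; linarith)
      rw [div_le_iff₀ (abs_sub_pos.mpr hij), sub_le_iff_le_add']
    have hβstar0 : 0 ≤ βstar := hβstar ▸ div_nonneg (by linarith) (abs_nonneg _)
    refine ⟨⟨hβstar0, fun i hi j hj => ?_⟩, fun β hβ => ?_⟩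
    · by_cases hgap : h i - h j > 2 * L
      · exact (hdiv_le _ i hi j hj hgap).mp (hmax ⟨i, hi, j, hj, hgap, rfl⟩)
      · linarith [mul_nonneg hβstar0 (abs_nonneg (t i - t j))]
    · exact hβstar ▸ (hdiv_le β i₀ hi₀ j₀ hj₀ hgap₀).mpr (hβ.2 i₀ hi₀ j₀ hj₀)
  · push Not at hwide
    rw [hβ0 hwide]
    exact ⟨⟨le_rfl, fun i hi j hj => by simpa using hwide i hi j hj⟩, fun β hβ => hβ.1⟩

namespace IsLinearInterpolation

lemma apply_vertex (hf : IsLinearInterpolation n t h f) (ht : IsPartition a b n t) (hn : 0 < n)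
    {i : ℕ} (hi : i ≤ n) : f (t i) = h i := by
  rcases hi.lt_or_eq with hi | rfl
  · rw [hf i hi _ ⟨le_rfl, (ht.lt_succ i hi).le⟩]; ring
  · obtain ⟨k, rfl⟩ := Nat.exists_eq_succ_of_ne_zero hn.ne'
    have hlt := ht.lt_succ k k.lt_succ_self
    rw [hf k k.lt_succ_self _ ⟨hlt.le, le_rfl⟩, mul_div_cancel₀ _ (sub_pos.mpr hlt).ne']
    ring

lemma affineWithSlope (hf : IsLinearInterpolation n t h f) (ht : IsPartition a b n t) {k : ℕ}
    (hk : k < n) :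
    AffineWithSlope ((h (k + 1) - h k) / (t (k + 1) - t k)) f (t k) (t (k + 1)) := fun x hx => by
  rw [hf k hk x hx, hf k hk (t k) ⟨le_rfl, (ht.lt_succ k hk).le⟩]; ring

lemma continuousOn (hf : IsLinearInterpolation n t h f) (ht : IsPartition a b n t) :
    ContinuousOn f (Icc a b) :=
  ht.glue (P := fun p q => ContinuousOn f (Icc p q)) (by simp) continuousOn_Icc_trans
    fun _ hk => (hf.affineWithSlope ht hk).continuousOn

lemma admissibleSlope_iff (hf : IsLinearInterpolation n t h f) (ht : IsPartition a b n t)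
    (hn : 0 < n) (hL : 0 ≤ L) : AdmissibleSlope a b L f β ↔
      0 ≤ β ∧ ∀ i ≤ n, ∀ j ≤ n, h i - h j ≤ 2 * L + β * |t i - t j| := by
  refine ⟨fun hβ => ⟨hβ.nonneg, fun i hi j hj => ?_⟩, fun ⟨hβ, hvertex⟩ =>
    ht.admissibleSlope_of_vertices hn hL (fun k hk => ⟨_, hf.affineWithSlope ht hk⟩) hβ
      fun i hi j hj => ?_⟩
  · rw [← hf.apply_vertex ht hn hi, ← hf.apply_vertex ht hn hj]
    exact hβ.sub_le _ (ht.mem_Icc hi) _ (ht.mem_Icc hj)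
  · rw [hf.apply_vertex ht hn hi, hf.apply_vertex ht hn hj]
    exact hvertex i hi j hj

lemma isLeast_admissibleSlope {βstar : ℝ} (hf : IsLinearInterpolation n t h f)
    (ht : IsPartition a b n t) (hn : 0 < n) (hL : 0 ≤ L)
    (hβ0 : (∀ i ≤ n, ∀ j ≤ n, h i - h j ≤ 2 * L) → βstar = 0)
    (hβmax : (∃ i ≤ n, ∃ j ≤ n, h i - h j > 2 * L) →
      IsGreatest {s : ℝ | ∃ i ≤ n, ∃ j ≤ n,
        h i - h j > 2 * L ∧ s = (h i - h j - 2 * L) / |t i - t j|} βstar) :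
    IsLeast {β | AdmissibleSlope a b L f β} βstar := by
  simp only [hf.admissibleSlope_iff ht hn hL]
  exact isLeast_slope_of_isGreatest ht.strictMonoOn.injOn hL hβ0 hβmax

end IsLinearInterpolation

theorem stmt_9_general {βstar : ℝ} (hab : a < b) (hL : 0 < L) (hf : ContinuousOn f (Icc a b))
    (hβstar : IsLeast {β | AdmissibleSlope a b L f β} βstar) :
    ∃ gstar : ℝ → ℝ, Feasible a b L f βstar gstar ∧
      ∀ β : ℝ, 0 ≤ β → ∀ g : ℝ → ℝ, Feasible a b L f β g →
        numLinks a b gstar ≤ numLinks a b g := by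
  obtain ⟨gstar, hgstar, hmin⟩ := hβstar.1.exists_feasible_forall_numLinks_le hab hL hf
  exact ⟨gstar, hgstar, fun β hβ g hg => hmin β (hβstar.2 (hg.admissibleSlope hβ)) g hg⟩

/-- there is a feasible β*-path whose number of links is at most the number
of links of every feasible β-path, for every β ≥ 0. -/
theorem stmt_9
    (n : ℕ) (hn : 1 ≤ n) (t h : ℕ → ℝ) (α L : ℝ) (f : ℝ → ℝ)
    (hα : 0 < α) (hL : 0 < L)
    (ht : ∀ i < n, t i < t (i + 1))
    (hslope : ∀ i < n,
      h (i + 1) - h i = α * (t (i + 1) - t i) ∨ h (i + 1) - h i = -α * (t (i + 1) - t i))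
    (halt : ∀ i, i + 1 < n → (h (i + 2) - h (i + 1)) * (h (i + 1) - h i) < 0)
    (hf : ∀ i < n, ∀ x ∈ Set.Icc (t i) (t (i + 1)),
      f x = h i + (x - t i) * ((h (i + 1) - h i) / (t (i + 1) - t i)))
    (βstar : ℝ)
    (hβ0 : (∀ i ≤ n, ∀ j ≤ n, h i - h j ≤ 2 * L) → βstar = 0)
    (hβmax : (∃ i ≤ n, ∃ j ≤ n, h i - h j > 2 * L) →
      IsGreatest {s : ℝ | ∃ i ≤ n, ∃ j ≤ n,
        h i - h j > 2 * L ∧ s = (h i - h j - 2 * L) / |t i - t j|} βstar) :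
    ∃ gstar : ℝ → ℝ, Feasible (t 0) (t n) L f βstar gstar ∧
      ∀ β : ℝ, 0 ≤ β → ∀ g : ℝ → ℝ, Feasible (t 0) (t n) L f β g →
        numLinks (t 0) (t n) gstar ≤ numLinks (t 0) (t n) g := by
  have ht : IsPartition (t 0) (t n) n t := ⟨rfl, rfl, ht⟩
  have hf : IsLinearInterpolation n t h f := hf
  exact stmt_9_general (ht.left_lt_right hn) hL (hf.continuousOn ht)
    (hf.isLeast_admissibleSlope ht hn hL.le hβ0 hβmax)
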